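/- Let V be a variety whose 2-generated free algebra F_V(2) is finite. The following are equivalent: (1) V is congruence meet-semidistributive; (2) for every n ≥ 2, the n-commutator is neutral in V (i.e., [α₁,…,αₙ] = α₁∧⋯∧αₙ for all congruences α₁,…,αₙ of every A ∈ V); (3) for some n ≥ 2, the n-commutator is neutral in V. -/

import Mathlib

set_option autoImplicit false

namespace UA

/-- A signature: a type of operation symbols, each with a finite arity. -/
structure Signature : Type 1 where
  ops : Type
  arity : ops → ℕ

/-- An algebra for a signature: a carrier set together with an interpretation
of every operation symbol. -/
structure Algebra (σ : Signature) : Type 1 where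
  carrier : Type
  interp : (o : σ.ops) → (Fin (σ.arity o) → carrier) → carrier

variable {σ : Signature}

/-- A congruence of an algebra: an equivalence relation compatible with all
basic operations. -/
structure Con (A : Algebra σ) : Type where
  r : A.carrier → A.carrier → Prop
  refl : ∀ a, r a a
  symm : ∀ {a b}, r a b → r b a
  trans : ∀ {a b c}, r a b → r b c → r a c
  compat : ∀ (o : σ.ops) (x y : Fin (σ.arity o) → A.carrier),
      (∀ i, r (x i) (y i)) → r (A.interp o x) (A.interp o y)

namespace Con

variable {A : Algebra σ}

instance : LE (Con A) := ⟨fun c d => ∀ a b : A.carrier, c.r a b → d.r a b⟩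
instance : LT (Con A) := ⟨fun c d => c ≤ d ∧ ¬ d ≤ c⟩

/-- The total congruence `1_A`. -/
def top : Con A where
  r := fun _ _ => True
  refl := fun _ => trivial
  symm := fun _ => trivial
  trans := fun _ _ => trivial
  compat := fun _ _ _ _ => trivial

/-- The identity congruence `0_A`. -/
def bot : Con A where
  r := fun a b => a = b
  refl := fun _ => rfl
  symm := fun h => h.symm
  trans := fun h h' => h.trans h'
  compat := fun o _ _ h => congrArg (A.interp o) (funext h)

/-- Meet of an arbitrary family of congruences (intersection). -/
def sInf (S : Set (Con A)) : Con A where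
  r a b := ∀ c ∈ S, c.r a b
  refl a c _ := c.refl a
  symm h c hc := c.symm (h c hc)
  trans h h' c hc := c.trans (h c hc) (h' c hc)
  compat o x y h c hc := c.compat o x y (fun i => h i c hc)

/-- Binary meet of congruences. -/
def inf (c d : Con A) : Con A where
  r a b := c.r a b ∧ d.r a b
  refl a := ⟨c.refl a, d.refl a⟩
  symm h := ⟨c.symm h.1, d.symm h.2⟩
  trans h h' := ⟨c.trans h.1 h'.1, d.trans h.2 h'.2⟩
  compat o x y h := ⟨c.compat o x y fun i => (h i).1, d.compat o x y fun i => (h i).2⟩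

/-- The congruence generated by a set of pairs. -/
def conGen (S : Set (A.carrier × A.carrier)) : Con A :=
  sInf {c : Con A | ∀ p ∈ S, c.r p.1 p.2}

/-- Binary join of congruences. -/
def sup (c d : Con A) : Con A := conGen {p | c.r p.1 p.2 ∨ d.r p.1 p.2}

/-- Join of a family of congruences. -/
def iSup {I : Type} (f : I → Con A) : Con A := conGen {p | ∃ i, (f i).r p.1 p.2}

/-- Composition of congruences as binary relations. -/
def comp (c d : Con A) (a b : A.carrier) : Prop := ∃ x, c.r a x ∧ d.r x b

/-- `d` covers `c` in the congruence lattice. -/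
def Covers (c d : Con A) : Prop := c < d ∧ ∀ e : Con A, c < e → e ≤ d → e = d

theorem le_sup_right {c d : Con A} : d ≤ sup c d :=
  fun a b h e he => he (a, b) (Or.inr h)

def toSetoid (c : Con A) : Setoid A.carrier := ⟨c.r, ⟨c.refl, c.symm, c.trans⟩⟩

end Con

/-- The quotient algebra `A/γ`. -/
noncomputable def quotAlg (A : Algebra σ) (γ : Con A) : Algebra σ where
  carrier := Quotient γ.toSetoid
  interp o x := Quotient.mk γ.toSetoid (A.interp o (fun i => (x i).out))

/-- The quotient congruence `α/γ` for `γ ≤ α`. -/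
noncomputable def Con.quot {A : Algebra σ} (α γ : Con A) (h : γ ≤ α) : Con (quotAlg A γ) where
  r x y := Quotient.liftOn₂ x y (fun a b => α.r a b)
    (fun a b a' b' ha hb => propext
      ⟨fun hr => α.trans (α.symm (h _ _ ha)) (α.trans hr (h _ _ hb)),
       fun hr => α.trans (h _ _ ha) (α.trans hr (α.symm (h _ _ hb)))⟩)
  refl x := Quotient.inductionOn x fun a => α.refl a
  symm {x y} h' := Quotient.inductionOn₂ x y (fun _ _ hab => α.symm hab) h'
  trans {x y z} h1 h2 :=
    Quotient.inductionOn₃ x y z (fun _ _ _ hab hbc => α.trans hab hbc) h1 h2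
  compat o x y hxy := by
    show α.r (A.interp o fun i => (x i).out) (A.interp o fun i => (y i).out)
    refine α.compat o _ _ fun i => ?_
    have h1 := hxy i
    rw [← Quotient.out_eq (x i), ← Quotient.out_eq (y i)] at h1
    exact h1

/-- The polynomial operations of an algebra: the clone generated by the basic
operations, the projections and the constants. -/
inductive IsPolynomial (A : Algebra σ) : {n : ℕ} → ((Fin n → A.carrier) → A.carrier) → Prop
  | proj {n : ℕ} (i : Fin n) : IsPolynomial A (fun x => x i)
  | const {n : ℕ} (a : A.carrier) : IsPolynomial A (fun _ : Fin n → A.carrier => a)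
  | app {n : ℕ} (o : σ.ops) (g : Fin (σ.arity o) → (Fin n → A.carrier) → A.carrier) :
      (∀ j, IsPolynomial A (g j)) → IsPolynomial A (fun x => A.interp o (fun j => g j x))

/-- Substituting, coordinatewise according to the grouping `g` and the choice
vector `ε`, the entries of `b` (where `ε` is `true`) or of `a` (where `ε` is `false`). -/
def chooseVec {β : Type} {N n : ℕ} (g : Fin N → Fin n) (a b : Fin N → β)
    (ε : Fin n → Bool) : Fin N → β :=
  fun i => if ε (g i) then b i else a i

/-- The higher centralizer relation `C(α₁,…,αₙ,β;δ)` of Bulatov.  Polynomials with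
grouped variables are modelled by a polynomial `p` of arity `N` together with a
grouping map `g : Fin N → Fin (n+1)`; the group `Fin.last n` is the `β`-group. -/
def Centralizes {A : Algebra σ} {n : ℕ} (α : Fin n → Con A) (β δ : Con A) : Prop :=
  ∀ (N : ℕ) (p : (Fin N → A.carrier) → A.carrier), IsPolynomial A p →
    ∀ (g : Fin N → Fin (n + 1)) (a b : Fin N → A.carrier),
      (∀ i, (Fin.lastCases (motive := fun _ => Con A) β α (g i)).r (a i) (b i)) →
      (∀ ε : Fin n → Bool, ε ≠ (fun _ => true) →
        δ.r (p (chooseVec g a b (Fin.lastCases (motive := fun _ => Bool) false ε)))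
            (p (chooseVec g a b (Fin.lastCases (motive := fun _ => Bool) true ε)))) →
      δ.r (p (chooseVec g a b (Fin.lastCases (motive := fun _ => Bool) false fun _ => true)))
          (p (chooseVec g a b (Fin.lastCases (motive := fun _ => Bool) true fun _ => true)))

/-- The higher commutator `[α₁,…,αₙ,β]`: the smallest congruence `δ` such that
`C(α₁,…,αₙ,β;δ)` holds. -/
def commutator {A : Algebra σ} {n : ℕ} (α : Fin n → Con A) (β : Con A) : Con A :=
  Con.sInf {δ : Con A | Centralizes α β δ}

/-- The higher commutator of a nonempty list of congruences, with the convention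
`[α] = α` for a single congruence. -/
def commList {A : Algebra σ} : {n : ℕ} → (Fin (n + 1) → Con A) → Con A
  | 0, γ => γ 0
  | (n+1), γ => commutator (fun j : Fin (n+1) => γ j.castSucc) (γ (Fin.last (n+1)))

/-- The `m`-fold commutator `[θ,…,θ]_m` (for `m ≥ 1`). -/
def nfold {A : Algebra σ} (θ : Con A) (m : ℕ) : Con A :=
  commList (fun _ : Fin (m - 1 + 1) => θ)

/-- The binary commutator `[c,d]`. -/
def binComm {A : Algebra σ} (c d : Con A) : Con A := commutator (fun _ : Fin 1 => c) d

/-- The lower central series `(θ]ⁿ`. -/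
def lcs {A : Algebra σ} (θ : Con A) : ℕ → Con A
  | 0 => θ
  | (k+1) => binComm θ (lcs θ k)

/-- The derived series `[θ]ⁿ`. -/
def derived {A : Algebra σ} (θ : Con A) : ℕ → Con A
  | 0 => θ
  | (k+1) => binComm (derived θ k) (derived θ k)

/-- An algebra is nilpotent if some term of the lower central series of `1_A` is `0_A`. -/
def Nilpotent (A : Algebra σ) : Prop := ∃ m, lcs (Con.top : Con A) m = Con.bot

/-- An algebra is nilpotent of class `n` if `(1_A]ⁿ = 0_A`. -/
def NilpotentOfClass (A : Algebra σ) (n : ℕ) : Prop := lcs (Con.top : Con A) n = Con.bot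

/-- A congruence is solvable if some term of its derived series is `0_A`. -/
def SolvableCon {A : Algebra σ} (θ : Con A) : Prop := ∃ m, derived θ m = Con.bot

/-- `A` is `n`-supernilpotent if `[1_A,…,1_A]_n = 0_A`. -/
def Supernilpotent (A : Algebra σ) (n : ℕ) : Prop := nfold (Con.top : Con A) n = Con.bot

/-- A polynomial `f` absorbs the tuple `a` to the element `c`. -/
def Absorbs (A : Algebra σ) {k : ℕ} (f : (Fin k → A.carrier) → A.carrier)
    (a : Fin k → A.carrier) (c : A.carrier) : Prop :=
  ∀ b : Fin k → A.carrier, (∃ i, b i = a i) → f b = c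

/-- Terms over a signature with variables in `X`. -/
inductive Term (σ : Signature) (X : Type) : Type
  | var : X → Term σ X
  | app : (o : σ.ops) → (Fin (σ.arity o) → Term σ X) → Term σ X

/-- Evaluation of a term in an algebra under an assignment of the variables. -/
def Term.eval {X : Type} (A : Algebra σ) (v : X → A.carrier) : Term σ X → A.carrier
  | Term.var x => v x
  | Term.app o t => A.interp o fun i => Term.eval A v (t i)

/-- Substitution of terms into a term. -/
def Term.subst {X Y : Type} : Term σ X → (X → Term σ Y) → Term σ Y
  | Term.var x, s => s x
  | Term.app o t, s => Term.app o fun i => Term.subst (t i) s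

/-- `A` possesses a Mal'cev term. -/
def HasMalcevTerm (A : Algebra σ) : Prop :=
  ∃ t : Term σ (Fin 3), ∀ a b : A.carrier,
    t.eval A ![a, b, b] = a ∧ t.eval A ![b, b, a] = a

/-- A class of algebras is a variety when it is the class of all models of a set
of identities. -/
def IsVariety (V : Algebra σ → Prop) : Prop :=
  ∃ E : Set (Term σ ℕ × Term σ ℕ),
    ∀ A : Algebra σ, V A ↔ ∀ e ∈ E, ∀ v : ℕ → A.carrier, e.1.eval A v = e.2.eval A v

/-- Two terms are `V`-equivalent when they evaluate equally in every member of `V`. -/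
def vSetoid (V : Algebra σ → Prop) (X : Type) : Setoid (Term σ X) where
  r t s := ∀ A : Algebra σ, V A → ∀ v : X → A.carrier, t.eval A v = s.eval A v
  iseqv := ⟨fun _ _ _ _ => rfl, fun h A hA v => (h A hA v).symm,
    fun h h' A hA v => (h A hA v).trans (h' A hA v)⟩

/-- The `V`-free algebra on the set `X` of generators. -/
noncomputable def freeAlg (V : Algebra σ → Prop) (X : Type) : Algebra σ where
  carrier := Quotient (vSetoid V X)
  interp o x := Quotient.mk (vSetoid V X) (Term.app o fun i => (x i).out)

/-- The principal congruence `θ(a,b)` generated by the pair `(a,b)`. -/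
def conPair (A : Algebra σ) (a b : A.carrier) : Con A := Con.conGen {(a, b)}

/-- A weak difference term for the class `V`. -/
def IsWeakDiffTerm (V : Algebra σ → Prop) (c : Term σ (Fin 3)) : Prop :=
  ∀ A : Algebra σ, V A → ∀ a b : A.carrier,
    (binComm (conPair A a b) (conPair A a b)).r (c.eval A ![a, b, b]) a ∧
    (binComm (conPair A a b) (conPair A a b)).r a (c.eval A ![b, b, a])

/-- A weak `n`-difference term for the class `V`. -/
def IsWeakNDiffTerm (V : Algebra σ → Prop) (n : ℕ) (c : Term σ (Fin 3)) : Prop :=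
  ∀ A : Algebra σ, V A → ∀ a b : A.carrier,
    (nfold (conPair A a b) n).r (c.eval A ![a, b, b]) a ∧
    (nfold (conPair A a b) n).r a (c.eval A ![b, b, a])

/-- Order-preserving maps on the congruence lattice. -/
def MonotoneCon {A : Algebra σ} (F : Con A → Con A) : Prop :=
  ∀ c d : Con A, c ≤ d → F c ≤ F d

/-- `p` is a weak `f`-term of `A` with respect to the interpretation `F`. -/
def IsWeakFTerm (A : Algebra σ) (F : Con A → Con A) (p : Term σ (Fin 3)) : Prop :=
  ∀ (θ : Con A) (a b : A.carrier), θ.r a b →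
    (F θ).r (p.eval A ![a, b, b]) a ∧ (F θ).r a (p.eval A ![b, b, a])

/-- `p` is a weak `f`-term for the class `V`. -/
def HasWeakFTermVariety (V : Algebra σ → Prop) (p : Term σ (Fin 3)) : Prop :=
  ∀ A : Algebra σ, V A → ∃ F : Con A → Con A, MonotoneCon F ∧ IsWeakFTerm A F p

/-- The set `T^θ_{n,f}(θ₁,…,θₙ)` of pairs coming from polynomials which
`f(θ)`-absorb on the cube `{ā₁,b̄₁}×⋯×{āₙ,b̄ₙ}`. -/
def TSet (A : Algebra σ) (F : Con A → Con A) (θ : Con A) {n : ℕ} (θs : Fin n → Con A) :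
    Set (A.carrier × A.carrier) :=
  {pr | ∃ (N : ℕ) (g : (Fin N → A.carrier) → A.carrier), IsPolynomial A g ∧
    ∃ (gr : Fin N → Fin n) (a b : Fin N → A.carrier),
      (∀ i, (θs (gr i)).r (a i) (b i)) ∧
      (∀ ε : Fin n → Bool, (∃ j, ε j = false) →
        (F θ).r (g (fun i => if ε (gr i) then b i else a i)) (g a)) ∧
      pr = (g b, g a)}

/-- Homomorphisms of algebras. -/
def IsHom (A B : Algebra σ) (h : A.carrier → B.carrier) : Prop :=
  ∀ (o : σ.ops) (x : Fin (σ.arity o) → A.carrier),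
    h (A.interp o x) = B.interp o (fun i => h (x i))

/-- The product of a family of algebras. -/
def prodAlg {I : Type} (As : I → Algebra σ) : Algebra σ where
  carrier := ∀ i, (As i).carrier
  interp o x i := (As i).interp o (fun j => x j i)

/-- The subuniverse generated by a subset. -/
inductive Gen (A : Algebra σ) (S : Set A.carrier) : A.carrier → Prop
  | base {a : A.carrier} : a ∈ S → Gen A S a
  | app (o : σ.ops) (x : Fin (σ.arity o) → A.carrier) :
      (∀ i, Gen A S (x i)) → Gen A S (A.interp o x)

/-- `A` possesses a Taylor term. -/
def HasTaylorTerm (A : Algebra σ) : Prop :=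
  ∃ (n : ℕ) (t : Term σ (Fin n)), 1 ≤ n ∧
    (∀ a : A.carrier, t.eval A (fun _ => a) = a) ∧
    ∀ i : Fin n, ∃ u v : Fin n → Bool, u i = true ∧ v i = false ∧
      ∀ x y : A.carrier,
        t.eval A (fun j => if u j then x else y) = t.eval A (fun j => if v j then x else y)

/-- The variety `V` possesses a Taylor term. -/
def VarietyHasTaylorTerm (V : Algebra σ → Prop) : Prop :=
  ∃ (n : ℕ) (t : Term σ (Fin n)), 1 ≤ n ∧
    (∀ A : Algebra σ, V A → ∀ a : A.carrier, t.eval A (fun _ => a) = a) ∧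
    ∀ i : Fin n, ∃ u v : Fin n → Bool, u i = true ∧ v i = false ∧
      ∀ A : Algebra σ, V A → ∀ x y : A.carrier,
        t.eval A (fun j => if u j then x else y) = t.eval A (fun j => if v j then x else y)

/-- `Ξ(θ)`: the smallest set of congruences containing `θ` and closed under
higher commutators (of arity at least 2) of its members. -/
inductive Xi {A : Algebra σ} (θ : Con A) : Con A → Prop
  | base : Xi θ θ
  | comm {k : ℕ} (γ : Fin (k + 2) → Con A) : (∀ j, Xi θ (γ j)) → Xi θ (commList γ)

/-- An expanded loop on the carrier `α` with extra operations indexed by `ι`. -/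
structure ExpLoop (ι : Type) (ar : ι → ℕ) (α : Type) : Type where
  mul : α → α → α
  ldiv : α → α → α
  rdiv : α → α → α
  zero : α
  extra : (i : ι) → (Fin (ar i) → α) → α
  ldiv_mul : ∀ x y, ldiv x (mul x y) = y
  mul_rdiv : ∀ x y, rdiv (mul x y) y = x
  mul_ldiv : ∀ x y, mul x (ldiv x y) = y
  rdiv_mul : ∀ x y, mul (rdiv x y) y = x
  zero_mul : ∀ x, mul zero x = x
  mul_zero : ∀ x, mul x zero = x

/-- Operation symbols of an expanded loop. -/
inductive LoopOp (ι : Type) : Type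
  | mul | ldiv | rdiv | zero
  | extra : ι → LoopOp ι

/-- The signature of an expanded loop. -/
@[reducible] def loopSig (ι : Type) (ar : ι → ℕ) : Signature where
  ops := LoopOp ι
  arity o := match o with
    | .mul => 2
    | .ldiv => 2
    | .rdiv => 2
    | .zero => 0
    | .extra i => ar i

/-- The algebra underlying an expanded loop. -/
def ExpLoop.toAlgebra {ι : Type} {ar : ι → ℕ} {α : Type} (L : ExpLoop ι ar α) :
    Algebra (loopSig ι ar) where
  carrier := α
  interp o := match o with
    | .mul => fun x => L.mul (x 0) (x 1)
    | .ldiv => fun x => L.ldiv (x 0) (x 1)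
    | .rdiv => fun x => L.rdiv (x 0) (x 1)
    | .zero => fun _ => L.zero
    | .extra i => L.extra i

/-- An expanded loop is of `n`-type. -/
def ExpLoop.IsNType {ι : Type} {ar : ι → ℕ} {α : Type} (L : ExpLoop ι ar α) (n : ℕ) : Prop :=
  (∀ p : Σ k : ℕ, (Fin k → α) → α,
      (∃ i : ι, p = ⟨ar i, L.extra i⟩) ↔
        (1 ≤ p.1 ∧ p.1 ≤ n - 1 ∧ IsPolynomial L.toAlgebra p.2 ∧
          Absorbs L.toAlgebra p.2 (fun _ => L.zero) L.zero)) ∧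
  (∀ f : (Fin (n - 1) → α) → α,
      IsPolynomial L.toAlgebra f → Absorbs L.toAlgebra f (fun _ => L.zero) L.zero →
      ∀ (j : Fin (n - 1)) (x : Fin (n - 1) → α) (u v : α),
        f (Function.update x j (L.mul u v)) =
          L.mul (f (Function.update x j u)) (f (Function.update x j v))) ∧
  (∀ k : ℕ, 2 ≤ k → k < n →
      commList (Fin.snoc (fun _ : Fin (n - k) => (Con.top : Con L.toAlgebra))
        (nfold Con.top k)) = Con.bot)

/-- `A` is polynomially equivalent to an `n`-type expanded loop on the same carrier. -/
def PolyEquivNTypeLoop (A : Algebra σ) (n : ℕ) : Prop :=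
  ∃ (ι : Type) (ar : ι → ℕ) (L : ExpLoop ι ar A.carrier),
    L.IsNType n ∧
    ∀ (k : ℕ) (f : (Fin k → A.carrier) → A.carrier),
      IsPolynomial A f ↔ IsPolynomial L.toAlgebra f

/-- Left-associated product of a list with initial value `c`. -/
def lprodFrom {β : Type} (mul : β → β → β) (c : β) (l : List β) : β := List.foldl mul c l

/-- Left-associated product of a list (with a default value for the empty list). -/
def lprodList {β : Type} (mul : β → β → β) (dflt : β) : List β → β
  | [] => dflt
  | a :: l => List.foldl mul a l

/-- Left-associated product of a nonempty tuple. -/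
def lassoc {β : Type} (mul : β → β → β) : {m : ℕ} → (Fin (m + 1) → β) → β
  | 0, y => y 0
  | (m+1), y => mul (lassoc mul (Fin.init y)) (y (Fin.last (m+1)))

/-- `A` has a representation of degree `n`. -/
def HasRepOfDegree (A : Algebra σ) (n : ℕ) : Prop :=
  ∃ (z : A.carrier) (r : (Fin 2 → A.carrier) → A.carrier),
    IsPolynomial A r ∧ (∀ x : A.carrier, r ![z, x] = x) ∧ (∀ x : A.carrier, r ![x, z] = x) ∧
    ∀ (k : ℕ) (f : (Fin k → A.carrier) → A.carrier), IsPolynomial A f →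
      ∃ (c : A.carrier) (R : ℕ → (Fin k → A.carrier) → A.carrier),
        (∀ m : ℕ, 1 ≤ m → m ≤ min k n →
          ∃ (l : List (Finset (Fin k)))
            (t : (S : Finset (Fin k)) → (Fin S.card → A.carrier) → A.carrier),
            l.Nodup ∧
            (∀ S : Finset (Fin k), S ∈ l ↔ S.card = m) ∧
            (∀ S ∈ l, IsPolynomial A (t S) ∧ Absorbs A (t S) (fun _ => z) z) ∧
            (∀ x : Fin k → A.carrier,
              R m x = lprodList (fun u v => r ![u, v]) z
                (l.map (fun S => t S (fun j => x ((S.orderIsoOfFin rfl j).val)))))) ∧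
        ∀ x : Fin k → A.carrier,
          f x = lprodFrom (fun u v => r ![u, v]) c
            ((List.range' 1 (min k n)).map (fun m => R m x))

/-- Products of `0`-absorbing polynomials (of arities between `lo` and `hi`)
in a given set of variables. -/
inductive ProdOfAbs {ι : Type} {ar : ι → ℕ} {α : Type} (L : ExpLoop ι ar α)
    (lo hi : ℕ) {I : Type} : ((I → α) → α) → Prop
  | base {p : ℕ} (h : (Fin p → α) → α) (sel : Fin p → I) :
      lo ≤ p → p ≤ hi → IsPolynomial L.toAlgebra h →
      Absorbs L.toAlgebra h (fun _ => L.zero) L.zero →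
      ProdOfAbs L lo hi (fun v => h (fun j => v (sel j)))
  | mul {F G : (I → α) → α} :
      ProdOfAbs L lo hi F → ProdOfAbs L lo hi G →
      ProdOfAbs L lo hi (fun v => L.mul (F v) (G v))

/-- The terms `q_m` (for `m ≥ 2`, `qSeq q (m-2)` is `q_m`):
`q₂ := q`, `q_{m+1}(x,y,z) := q(x, q_m(x,y,y), q_m(x,y,z))`. -/
def qSeq (q : Term σ (Fin 3)) : ℕ → Term σ (Fin 3)
  | 0 => q
  | (k+1) => q.subst ![Term.var 0, (qSeq q k).subst ![Term.var 0, Term.var 1, Term.var 1], qSeq q k]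

/-!
If `α ⊓ β = α ⊓ γ`, then the centralizer of `α` modulo `α ⊓ β` contains both `β` and `γ`, hence
`β ⊔ γ`, so that `[β ⊔ γ, α, …, α] ≤ α ⊓ β`; a neutral commutator turns this into the
meet-semidistributive law.

Conversely, let `C(γ₀,…,γₙ;δ)` and `θ = ⨅ i, γ i`, so that `C(θ,…,θ;δ ⊓ θ)`. If `θ ≤ δ` fails at a
pair `(a, b)`, the subalgebra of `A/(δ ⊓ θ)` generated by `a` and `b` is finite, and its congruence
lattice has an atom `μ` with `C(μ,…,μ;⊥)`. On a `⟨0, μ⟩`-minimal set no polynomial acts like a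
semilattice operation, whence a twin lemma: in the algebra induced on a trace, every polynomial
cancels or ignores each of its arguments. Consequently two polynomials of this algebra that agree
where `xᵢ = xⱼ` and where `xᵢ = xₖ` are equal. In the algebra of ternary polynomials let `D i j` be
the congruence of agreement at the points of the trace with `xᵢ = xⱼ`: then `D 0 2 ⊓ D 0 1` and
`D 0 2 ⊓ D 1 2` are both equality on the trace, while `D 0 2 ⊓ (D 0 1 ⊔ D 1 2)` relates the first
and the last projection, against meet-semidistributivity.
-/

section Lattice

variable {A : Algebra σ}

@[ext]
theorem Con.ext {c d : Con A} (h : ∀ a b, c.r a b ↔ d.r a b) : c = d := by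
  have hr : c.r = d.r := funext₂ fun a b => propext (h a b)
  cases c
  cases d
  congr

instance : PartialOrder (Con A) where
  le_refl _ _ _ h := h
  le_trans _ _ _ h h' a b hab := h' a b (h a b hab)
  le_antisymm _ _ h h' := Con.ext fun a b => ⟨h a b, h' a b⟩
  lt_iff_le_not_ge _ _ := Iff.rfl

instance : InfSet (Con A) := ⟨Con.sInf⟩

instance : CompleteLattice (Con A) where
  __ := completeLatticeOfInf (Con A) fun _ =>
    ⟨fun _ hc _ _ h => h _ hc, fun _ hd a b hab _ hc => hd hc a b hab⟩
  inf := Con.inf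
  inf_le_left _ _ _ _ h := h.1
  inf_le_right _ _ _ _ h := h.2
  le_inf _ _ _ h h' a b hab := ⟨h a b hab, h' a b hab⟩
  sup := Con.sup
  le_sup_left _ _ a b h _ he := he (a, b) (Or.inl h)
  le_sup_right _ _ := Con.le_sup_right
  sup_le _ _ e h h' _ _ hab := hab e fun p hp => hp.elim (h p.1 p.2) (h' p.1 p.2)
  bot := Con.bot
  bot_le c a _ h := h ▸ c.refl a
  top := Con.top
  le_top _ _ _ _ := trivial

instance [Finite A.carrier] : Finite (Con A) :=
  Finite.of_injective Con.r fun _ _ h => Con.ext fun a b => by rw [h]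

theorem Con.exists_ne_of_ne_bot {θ : Con A} (h : θ ≠ ⊥) : ∃ a b, θ.r a b ∧ a ≠ b := by
  by_contra! hθ
  exact h (bot_unique hθ)

end Lattice

section Polynomials

variable {A : Algebra σ} {n : ℕ}

theorem Con.r_polynomial (c : Con A) {p : (Fin n → A.carrier) → A.carrier} (hp : IsPolynomial A p)
    {x y : Fin n → A.carrier} (h : ∀ i, c.r (x i) (y i)) : c.r (p x) (p y) := by
  induction hp with
  | proj i => exact h i
  | const a => exact c.refl a
  | app o g _ ih => exact c.compat o _ _ ih

theorem IsPolynomial.comp {k : ℕ} {p : (Fin n → A.carrier) → A.carrier} (hp : IsPolynomial A p)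
    {q : Fin n → (Fin k → A.carrier) → A.carrier} (hq : ∀ i, IsPolynomial A (q i)) :
    IsPolynomial A (fun x => p (fun i => q i x)) := by
  induction hp with
  | proj i => exact hq i
  | const a => exact .const a
  | app o g _ ih => exact .app o _ ih

theorem IsPolynomial.update {k : ℕ} {q : Fin n → (Fin k → A.carrier) → A.carrier}
    (hq : ∀ i, IsPolynomial A (q i)) (j : Fin n) {u : (Fin k → A.carrier) → A.carrier}
    (hu : IsPolynomial A u) (i : Fin n) :
    IsPolynomial A (fun x => Function.update (fun i => q i x) j (u x) i) := by
  obtain rfl | hij := eq_or_ne i j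
  · simpa only [Function.update_self]
  · simpa only [Function.update_of_ne hij] using hq i

/-- Unary polynomials, as plain functions of one argument. -/
def IsPolynomial₁ (A : Algebra σ) (f : A.carrier → A.carrier) : Prop :=
  IsPolynomial A fun x : Fin 1 → A.carrier => f (x 0)

/-- Binary polynomials, as curried functions of two arguments. -/
def IsPolynomial₂ (A : Algebra σ) (f : A.carrier → A.carrier → A.carrier) : Prop :=
  IsPolynomial A fun x : Fin 2 → A.carrier => f (x 0) (x 1)

theorem IsPolynomial₁.id : IsPolynomial₁ A fun x => x := IsPolynomial.proj 0

theorem IsPolynomial₁.apply {f : A.carrier → A.carrier} (hf : IsPolynomial₁ A f)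
    {u : (Fin n → A.carrier) → A.carrier} (hu : IsPolynomial A u) :
    IsPolynomial A fun x => f (u x) :=
  IsPolynomial.comp (q := fun _ => u) hf fun _ => hu

theorem IsPolynomial₂.apply {f : A.carrier → A.carrier → A.carrier} (hf : IsPolynomial₂ A f)
    {u v : (Fin n → A.carrier) → A.carrier} (hu : IsPolynomial A u) (hv : IsPolynomial A v) :
    IsPolynomial A fun x => f (u x) (v x) :=
  IsPolynomial.comp (q := ![u, v]) hf (Fin.forall_fin_two.2 ⟨hu, hv⟩)

theorem IsPolynomial₁.comp {f g : A.carrier → A.carrier} (hf : IsPolynomial₁ A f)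
    (hg : IsPolynomial₁ A g) : IsPolynomial₁ A (f ∘ g) :=
  hf.apply hg

theorem IsPolynomial₁.iterate {f : A.carrier → A.carrier} (hf : IsPolynomial₁ A f) :
    ∀ k, IsPolynomial₁ A f^[k]
  | 0 => .id
  | k + 1 => (hf.iterate k).comp hf

theorem IsPolynomial₂.iterate {f : A.carrier → A.carrier → A.carrier} (hf : IsPolynomial₂ A f)
    (k : ℕ) : IsPolynomial₂ A fun x y => (f x)^[k] y := by
  induction k with
  | zero => exact .proj 1
  | succ k ih =>
    simp only [Function.iterate_succ_apply']
    exact hf.apply (.proj 0) ih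

theorem IsPolynomial₂.foldl {f : A.carrier → A.carrier → A.carrier} (hf : IsPolynomial₂ A f)
    {ι : Type} {v : ι → (Fin n → A.carrier) → A.carrier} (hv : ∀ j, IsPolynomial A (v j))
    (l : List ι) {u : (Fin n → A.carrier) → A.carrier} (hu : IsPolynomial A u) :
    IsPolynomial A fun x => l.foldl (fun a j => f a (v j x)) (u x) := by
  induction l generalizing u with
  | nil => exact hu
  | cons j _ ih => exact ih (hf.apply hu (hv j))

theorem Con.r_polynomial₁ (c : Con A) {f : A.carrier → A.carrier} (hf : IsPolynomial₁ A f)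
    {a b : A.carrier} (h : c.r a b) : c.r (f a) (f b) :=
  c.r_polynomial hf (x := fun _ => a) (y := fun _ => b) fun _ => h

theorem Con.r_polynomial₂ (c : Con A) {f : A.carrier → A.carrier → A.carrier}
    (hf : IsPolynomial₂ A f) {a b a' b' : A.carrier} (h : c.r a b) (h' : c.r a' b') :
    c.r (f a a') (f b b') :=
  c.r_polynomial hf (x := ![a, a']) (y := ![b, b']) (Fin.forall_fin_two.2 ⟨h, h'⟩)

end Polynomials

section Translations

theorem update_induction {ι X : Type} [Finite ι] [DecidableEq ι] {K : ι → X → X → Prop}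
    {x y : ι → X} (h : ∀ i, K i (x i) (y i)) {P : (ι → X) → Prop} (hx : P x)
    (step : ∀ u i w, K i (u i) w → P u → P (Function.update u i w)) : P y := by
  have := Fintype.ofFinite ι
  have hP (s : Finset ι) : P (s.piecewise y x) := by
    induction s using Finset.induction_on with
    | empty => rwa [Finset.piecewise_empty]
    | insert j s hj ih =>
      rw [Finset.piecewise_insert]
      refine step _ _ _ ?_ ih
      rw [Finset.piecewise_eq_of_notMem _ _ _ hj]
      exact h j
  simpa only [Finset.piecewise_univ] using hP Finset.univ

variable {A : Algebra σ}

/-- The congruence on an equivalence relation that the basic operations preserve in each argument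
separately. -/
def Con.ofTranslations (s : Setoid A.carrier)
    (h : ∀ (o : σ.ops) (x : Fin (σ.arity o) → A.carrier) (j : Fin (σ.arity o)) (u v : A.carrier),
      s u v → s (A.interp o (Function.update x j u)) (A.interp o (Function.update x j v))) :
    Con A where
  r := s
  refl := s.refl
  symm := s.symm
  trans := s.trans
  compat o x y hxy := by
    refine update_induction (K := fun _ => s) hxy (P := fun z => s (A.interp o x) (A.interp o z))
      (s.refl _) fun u i w hw hu => s.trans hu ?_
    simpa only [Function.update_eq_self] using h o u i (u i) w hw

theorem isPolynomial₁_interp_update (o : σ.ops) (x : Fin (σ.arity o) → A.carrier)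
    (j : Fin (σ.arity o)) : IsPolynomial₁ A fun u => A.interp o (Function.update x j u) :=
  .app o _ (IsPolynomial.update (fun i => .const (x i)) j (.proj 0))

/-- The largest congruence contained in the equivalence relation `s`. -/
def Con.interior (s : Setoid A.carrier) : Con A :=
  Con.ofTranslations
    { r := fun u v => ∀ t, IsPolynomial₁ A t → s (t u) (t v)
      iseqv := ⟨fun _ _ _ => s.refl _, fun h t ht => s.symm (h t ht),
        fun h h' t ht => s.trans (h t ht) (h' t ht)⟩ }
    fun o x j _ _ huv _ ht => huv _ (ht.comp (isPolynomial₁_interp_update o x j))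

theorem exists_polynomial₁_separating {θ : Con A} (hθ : IsAtom θ) (s : Setoid A.carrier)
    (hs : ∃ a b, θ.r a b ∧ ¬ s a b) {u v : A.carrier} (huv : θ.r u v) (hne : u ≠ v) :
    ∃ t, IsPolynomial₁ A t ∧ ¬ s (t u) (t v) := by
  by_contra! h
  have hle : θ ≤ Con.interior s := by
    refine hθ.not_disjoint_iff_le.1 fun hd => hne ?_
    exact hd.le_bot u v ⟨huv, h⟩
  obtain ⟨a, b, hab, hsab⟩ := hs
  exact hsab (hle a b hab _ .id)

end Translations

section TupleCentralizes

variable {A : Algebra σ} {n : ℕ}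

/-- The higher centralizer relation `C(γ₀,…,γₙ;δ)` for a single tuple of congruences, rather than
for a tuple and a last congruence. -/
def TupleCentralizes (γ : Fin (n + 1) → Con A) (δ : Con A) : Prop :=
  ∀ (N : ℕ) (p : (Fin N → A.carrier) → A.carrier), IsPolynomial A p →
    ∀ (g : Fin N → Fin (n + 1)) (a b : Fin N → A.carrier), (∀ i, (γ (g i)).r (a i) (b i)) →
      (∀ ε : Fin n → Bool, (ε ≠ fun _ => true) →
        δ.r (p (chooseVec g a b (Fin.snoc ε false))) (p (chooseVec g a b (Fin.snoc ε true)))) →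
      δ.r (p (chooseVec g a b (Fin.snoc (fun _ => true) false)))
        (p (chooseVec g a b (Fin.snoc (fun _ => true) true)))

theorem lastCases_eq_snoc {β : Type} (f : Fin n → β) (b : β) :
    (fun i => Fin.lastCases (motive := fun _ => β) b f i) = Fin.snoc f b := by
  funext i
  cases i using Fin.lastCases <;> simp

theorem centralizes_iff_tupleCentralizes {γ : Fin (n + 1) → Con A} {δ : Con A} :
    Centralizes (fun j : Fin n => γ j.castSucc) (γ (Fin.last n)) δ ↔ TupleCentralizes γ δ := by
  have hγ (i : Fin (n + 1)) : Fin.lastCases (motive := fun _ => Con A) (γ (Fin.last n))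
      (fun j : Fin n => γ j.castSucc) i = γ i := by
    cases i using Fin.lastCases <;> simp
  simp only [Centralizes, TupleCentralizes, hγ, lastCases_eq_snoc]

theorem commList_eq_sInf (γ : Fin (n + 1 + 1) → Con A) :
    commList γ = sInf {δ | TupleCentralizes γ δ} := by
  simp only [← centralizes_iff_tupleCentralizes]
  rfl

theorem TupleCentralizes.mono {γ γ' : Fin (n + 1) → Con A} {δ : Con A}
    (h : TupleCentralizes γ δ) (hγ : γ' ≤ γ) : TupleCentralizes γ' δ :=
  fun N p hp g a b hab => h N p hp g a b fun i => hγ _ _ _ (hab i)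

theorem TupleCentralizes.inf {γ : Fin (n + 1) → Con A} {δ δ' : Con A}
    (h : TupleCentralizes γ δ) (h' : TupleCentralizes γ δ') : TupleCentralizes γ (δ ⊓ δ') :=
  fun N p hp g a b hab hε => ⟨h N p hp g a b hab fun ε hne => (hε ε hne).1,
    h' N p hp g a b hab fun ε hne => (hε ε hne).2⟩

theorem chooseVec_update {X : Type} {N : ℕ} (g : Fin N → Fin n) (a b : Fin N → X)
    (ε : Fin n → Bool) (k : Fin n) (w : Bool) :
    chooseVec g a b (Function.update ε k w) =
      fun i => if g i = k then (if w then b i else a i) else chooseVec g a b ε i := by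
  funext i
  by_cases hi : g i = k
  · simp only [chooseVec, hi, Function.update_self, if_true]
  · simp only [chooseVec, Function.update_of_ne hi, if_neg hi]

theorem chooseVec_rel {N : ℕ} {γ : Fin n → Con A} {g : Fin N → Fin n} {a b : Fin N → A.carrier}
    (hab : ∀ i, (γ (g i)).r (a i) (b i)) (ε ε' : Fin n → Bool) (i : Fin N) :
    (γ (g i)).r (chooseVec g a b ε i) (chooseVec g a b ε' i) := by
  unfold chooseVec
  split_ifs
  exacts [Con.refl _ _, Con.symm _ (hab i), hab i, Con.refl _ _]

theorem chooseVec_update_rel {N : ℕ} {γ : Fin n → Con A} {g : Fin N → Fin n}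
    {a b : Fin N → A.carrier} (hab : ∀ i, (γ (g i)).r (a i) (b i)) (ε : Fin n → Bool) (k : Fin n)
    (w w' : Bool) (i : Fin N) :
    (γ k).r (chooseVec g a b (Function.update ε k w) i)
      (chooseVec g a b (Function.update ε k w') i) := by
  by_cases hi : g i = k
  · exact hi ▸ chooseVec_rel hab _ _ i
  · simpa only [chooseVec_update, if_neg hi] using (γ k).refl _

theorem tupleCentralizes_apply (γ : Fin (n + 1) → Con A) (k : Fin (n + 1)) :
    TupleCentralizes γ (γ k) := by
  intro N p hp g a b hab hε
  have hrel (ε : Fin (n + 1) → Bool) (w w' : Bool) :=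
    (γ k).r_polynomial hp (chooseVec_update_rel hab ε k w w')
  cases k using Fin.lastCases with
  | last => simpa only [Fin.update_snoc_last] using hrel (Fin.snoc (fun _ => true) false) false true
  | cast j =>
    have hflip (w : Bool) := hrel (Fin.snoc (fun _ => true) w) false true
    simp only [← Fin.snoc_update, Function.update_eq_self_iff.2] at hflip
    have hj := hε (Function.update (fun _ => true) j false) fun h => by simpa using congrFun h j
    exact Con.trans _ (Con.symm _ (hflip false)) (Con.trans _ hj (hflip true))

theorem commList_le_iInf (γ : Fin (n + 1 + 1) → Con A) : commList γ ≤ ⨅ i, γ i := by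
  rw [commList_eq_sInf]
  exact le_iInf fun k => sInf_le (tupleCentralizes_apply γ k)

end TupleCentralizes

section NeutralToMeetSemidistributive

variable {A : Algebra σ}

/-- Meet-semidistributivity of the congruence lattice of a single algebra. -/
def MeetSemidistributive (A : Algebra σ) : Prop :=
  ∀ α β γ : Con A, α ⊓ β = α ⊓ γ → α ⊓ β = α ⊓ (β ⊔ γ)

/-- Neutrality of the `(n + 1)`-ary commutator in a single algebra. -/
def NeutralCommutator (A : Algebra σ) (n : ℕ) : Prop :=
  ∀ γ : Fin (n + 1) → Con A, commList γ = ⨅ i, γ i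

/-- The largest congruence `η` such that `α` does not distinguish, modulo `δ`, between `η`-related
values of the first variable of a polynomial: the centralizer of `α` modulo `δ`. -/
def Con.centralizer (α δ : Con A) : Con A :=
  Con.ofTranslations
    { r := fun u v => ∀ (N : ℕ) (p : (Fin (N + 1) → A.carrier) → A.carrier), IsPolynomial A p →
        ∀ s t : Fin N → A.carrier, (∀ i, α.r (s i) (t i)) →
          (δ.r (p (Fin.cons u s)) (p (Fin.cons u t)) ↔ δ.r (p (Fin.cons v s)) (p (Fin.cons v t)))
      iseqv := ⟨fun _ _ _ _ _ _ _ => Iff.rfl, fun h N p hp s t hst => (h N p hp s t hst).symm,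
        fun h h' N p hp s t hst => (h N p hp s t hst).trans (h' N p hp s t hst)⟩ }
    fun o x j u v huv N p hp s t hst => by
      let q : (Fin (N + 1) → A.carrier) → A.carrier := fun y =>
        p (Function.update y 0 (A.interp o (Function.update x j (y 0))))
      have hq : IsPolynomial A q := hp.comp (IsPolynomial.update .proj 0
        (.app o _ (IsPolynomial.update (fun i => .const (x i)) j (.proj 0))))
      simpa only [q, Fin.update_cons_zero, Fin.cons_zero] using huv N q hq s t hst

theorem Con.le_centralizer_inf (α β : Con A) : β ≤ α.centralizer (α ⊓ β) := by
  intro u v huv N p hp s t hst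
  have hα (w : A.carrier) : α.r (p (Fin.cons w s)) (p (Fin.cons w t)) :=
    α.r_polynomial hp (Fin.cases (α.refl w) hst)
  have hβ (x : Fin N → A.carrier) : β.r (p (Fin.cons u x)) (p (Fin.cons v x)) :=
    β.r_polynomial hp (Fin.cases huv fun i => β.refl (x i))
  exact ⟨fun h => ⟨hα v, β.trans (β.symm (hβ s)) (β.trans h.2 (hβ t))⟩,
    fun h => ⟨hα u, β.trans (hβ s) (β.trans h.2 (β.symm (hβ t)))⟩⟩

theorem Con.r_update_of_centralizer_r {α δ : Con A} {u v : A.carrier}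
    (huv : (α.centralizer δ).r u v) {N : ℕ} {p : (Fin N → A.carrier) → A.carrier}
    (hp : IsPolynomial A p) {s t : Fin N → A.carrier} (hst : ∀ i, α.r (s i) (t i)) (j : Fin N)
    (h : δ.r (p (Function.update s j u)) (p (Function.update t j u))) :
    δ.r (p (Function.update s j v)) (p (Function.update t j v)) := by
  have hq : IsPolynomial A fun y : Fin (N + 1) → A.carrier =>
      p (Function.update (fun i => y i.succ) j (y 0)) :=
    hp.comp (IsPolynomial.update (fun i => .proj i.succ) j (.proj 0))
  exact (huv N _ hq s t hst).1 h

theorem Con.r_piecewise_of_centralizer_r {α δ : Con A} {N : ℕ}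
    {p : (Fin N → A.carrier) → A.carrier} (hp : IsPolynomial A p) {s t x y : Fin N → A.carrier}
    (hst : ∀ i, α.r (s i) (t i)) (S : Set (Fin N)) [DecidablePred (· ∈ S)]
    (hxy : ∀ i, i ∈ S → (α.centralizer δ).r (x i) (y i))
    (h : δ.r (p (S.piecewise x s)) (p (S.piecewise x t))) :
    δ.r (p (S.piecewise y s)) (p (S.piecewise y t)) := by
  refine update_induction (K := fun i u v => i ∈ S → (α.centralizer δ).r u v) hxy
    (P := fun x => δ.r (p (S.piecewise x s)) (p (S.piecewise x t))) h fun x i u hu hx => ?_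
  by_cases hi : i ∈ S
  · have hz (j : Fin N) : α.r (S.piecewise x s j) (S.piecewise x t j) := by
      by_cases hj : j ∈ S <;> simp [hj, hst j, α.refl]
    have hpw (s : Fin N → A.carrier) (u : A.carrier) :
        S.piecewise (Function.update x i u) s = Function.update (S.piecewise x s) i u := by
      funext j
      by_cases hj : j = i <;> simp [Set.piecewise, hj, hi]
    rw [hpw, hpw]
    refine Con.r_update_of_centralizer_r (hu hi) hp hz i ?_
    rwa [← hpw, ← hpw, Function.update_eq_self]
  · have hpw (s : Fin N → A.carrier) :
        S.piecewise (Function.update x i u) s = S.piecewise x s := by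
      funext j
      by_cases hj : j = i <;> simp [Set.piecewise, hj, hi]
    rwa [hpw, hpw]

theorem tupleCentralizes_cons_of_le_centralizer {η α δ : Con A} (hη : η ≤ α.centralizer δ)
    (n : ℕ) : TupleCentralizes (Fin.cons η fun _ : Fin (n + 1) => α) δ := by
  intro N p hp g a b hab hε
  let v (w : Bool) : Fin N → A.carrier := chooseVec g a b (Fin.snoc (fun _ => true) w)
  have hchoose (c w : Bool) :
      chooseVec g a b (Fin.snoc (Function.update (fun _ => true) 0 c) w) =
        {i | g i = 0}.piecewise (if c then b else a) (v w) := by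
    rw [Fin.snoc_update, chooseVec_update]
    cases c <;> rfl
  have hv (w : Bool) : v w = {i | g i = 0}.piecewise b (v w) := by
    simpa only [Function.update_eq_self, if_true] using hchoose true w
  have hα (i : Fin N) : α.r (v false i) (v true i) := by
    by_cases hi : g i = 0
    · have hvi (w : Bool) : v w i = b i :=
        (congrFun (hv w) i).trans (Set.piecewise_eq_of_mem _ _ _ hi)
      rw [hvi, hvi]
      exact α.refl _
    · obtain ⟨j, hj⟩ := Fin.exists_succ_eq.2 hi
      simpa only [← hj, Fin.cons_succ] using chooseVec_rel hab
        (Fin.snoc (fun _ => true) false) (Fin.snoc (fun _ => true) true) i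
  have h0 := hε (Function.update (fun _ => true) 0 false) fun h => by simpa using congrFun h 0
  change δ.r (p (v false)) (p (v true))
  rw [hchoose, hchoose] at h0
  rw [hv, hv true]
  refine Con.r_piecewise_of_centralizer_r hp hα _ (fun i hi => hη _ _ ?_) h0
  have hi : g i = 0 := hi
  change η.r (a i) (b i)
  simpa only [hi, Fin.cons_zero] using hab i

theorem NeutralCommutator.meetSemidistributive {n : ℕ} (h : NeutralCommutator A (n + 1)) :
    MeetSemidistributive A := by
  intro α β γ hαβγ
  have hcent : β ⊔ γ ≤ α.centralizer (α ⊓ β) :=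
    sup_le (Con.le_centralizer_inf α β) (hαβγ ▸ Con.le_centralizer_inf α γ)
  refine le_antisymm (inf_le_inf_left α le_sup_left) ?_
  calc α ⊓ (β ⊔ γ) ≤ ⨅ i, (Fin.cons (β ⊔ γ) fun _ => α : Fin (n + 1 + 1) → Con A) i :=
        le_iInf (Fin.cases inf_le_right fun _ => inf_le_left)
    _ = commList (Fin.cons (β ⊔ γ) fun _ => α) := (h _).symm
    _ ≤ α ⊓ β := by
        rw [commList_eq_sInf]
        exact sInf_le (tupleCentralizes_cons_of_le_centralizer hcent n)

end NeutralToMeetSemidistributive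

section MinimalSets

theorem exists_forall_iterate_succ_eq_id (X : Type) [Finite X] :
    ∃ k, ∀ f : X → X, f.Injective → f^[k + 1] = id := by
  obtain ⟨k, hk⟩ := Nat.exists_eq_succ_of_ne_zero (Nat.card_pos (α := Equiv.Perm X)).ne'
  refine ⟨k, fun f hf => ?_⟩
  let π : Equiv.Perm X := Equiv.ofBijective f (Finite.injective_iff_bijective.1 hf)
  have hπ : π ^ (k + 1) = 1 := by rw [← Nat.succ_eq_add_one, ← hk, pow_card_eq_one']
  change π^[k + 1] = id
  rw [Equiv.Perm.iterate_eq_pow, hπ, Equiv.Perm.coe_one]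

theorem exists_forall_iterate_succ_eqOn_id {X : Type} (s : Set X) [Finite s] :
    ∃ k, ∀ f : X → X, s.MapsTo f s → s.InjOn f → s.EqOn f^[k + 1] id := by
  obtain ⟨k, hk⟩ := exists_forall_iterate_succ_eq_id s
  refine ⟨k, fun f hf hinj x hx => ?_⟩
  rw [← hf.coe_iterate_restrict ⟨x, hx⟩, hk _ (hf.restrict_inj.2 hinj)]
  rfl

variable {A : Algebra σ}

/-- The map `f` is constant on the classes of `θ`. -/
def Con.CollapsedBy (θ : Con A) (f : A.carrier → A.carrier) : Prop :=
  ∀ x y, θ.r x y → f x = f y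

/-- The map `e` is an idempotent polynomial whose range is a `⟨0, θ⟩`-minimal set in the sense of
tame congruence theory. -/
structure IsMinimalIdempotent (θ : Con A) (e : A.carrier → A.carrier) : Prop where
  isPolynomial : IsPolynomial₁ A e
  idem : ∀ x, e (e x) = e x
  not_collapsedBy : ¬ θ.CollapsedBy e
  injOn : ∀ f, IsPolynomial₁ A f → ¬ θ.CollapsedBy (f ∘ e) → (Set.range e).InjOn f

theorem exists_idempotent_polynomial₁_range_eq {θ : Con A} (hθ : IsAtom θ)
    {f : A.carrier → A.carrier} [Finite (Set.range f)] (hf : IsPolynomial₁ A f)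
    (hfθ : ¬ θ.CollapsedBy f)
    (hinj : ∀ h, IsPolynomial₁ A h → ¬ θ.CollapsedBy (h ∘ f) → (Set.range f).InjOn h) :
    ∃ e, IsPolynomial₁ A e ∧ Set.range e = Set.range f ∧ (∀ x, e (e x) = e x) ∧
      ¬ θ.CollapsedBy e := by
  simp only [Con.CollapsedBy, not_forall] at hfθ
  obtain ⟨a, b, hab, hfab⟩ := hfθ
  obtain ⟨t, ht, htab⟩ := exists_polynomial₁_separating hθ (Setoid.ker f) ⟨a, b, hab, hfab⟩
    (θ.r_polynomial₁ hf hab) hfab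
  have hft := hf.comp ht
  obtain ⟨k, hk⟩ := exists_forall_iterate_succ_eqOn_id (Set.range f)
  have hid : (Set.range f).EqOn (f ∘ t)^[k + 1] id :=
    hk _ (fun _ _ => Set.mem_range_self _) (hinj _ hft fun h => htab (h a b hab))
  have hrange : Set.range (f ∘ t)^[k + 1] = Set.range f := by
    refine Set.Subset.antisymm ?_ fun x hx => ⟨x, hid hx⟩
    rw [Function.iterate_succ', Function.comp_assoc]
    exact Set.range_comp_subset_range _ _
  refine ⟨(f ∘ t)^[k + 1], hft.iterate _, hrange,
    fun x => hid (hrange ▸ Set.mem_range_self x), fun h => hfab ?_⟩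
  have hfix (x : A.carrier) : (f ∘ t)^[k + 1] (f x) = f x := hid (Set.mem_range_self x)
  rw [← hfix a, ← hfix b]
  exact h _ _ (θ.r_polynomial₁ hf hab)

theorem exists_isMinimalIdempotent [Finite A.carrier] {θ : Con A} (hθ : IsAtom θ) :
    ∃ e, IsMinimalIdempotent θ e := by
  obtain ⟨c, d, hcd, hne⟩ := Con.exists_ne_of_ne_bot hθ.1
  obtain ⟨f, ⟨hf, hfθ⟩, hmin⟩ := exists_minimalFor_of_wellFoundedLT
    (fun f => IsPolynomial₁ A f ∧ ¬ θ.CollapsedBy f) (fun f => (Set.range f).ncard)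
    ⟨fun x => x, .id, fun h => hne (h c d hcd)⟩
  have hinj {e h : A.carrier → A.carrier} (he : IsPolynomial₁ A e)
      (hef : Set.range e = Set.range f) (hh : IsPolynomial₁ A h)
      (hhe : ¬ θ.CollapsedBy (h ∘ e)) : (Set.range e).InjOn h := by
    refine Set.injOn_of_ncard_image_eq (le_antisymm Set.ncard_image_le ?_)
    rw [← Set.range_comp, hef]
    exact le_of_not_gt fun hlt => hlt.not_ge (hmin ⟨hh.comp he, hhe⟩ hlt.le)
  obtain ⟨e, he, hrange, hidem, heθ⟩ :=
    exists_idempotent_polynomial₁_range_eq hθ hf hfθ fun _ => hinj hf rfl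
  exact ⟨e, he, hidem, heθ, fun _ => hinj he hrange⟩

end MinimalSets

section Twins

variable {A : Algebra σ} {θ : Con A} {n : ℕ}

theorem foldl_ite_eq {X ι : Type} {F : X → X → X} {c d x z : X} (hxc : F x c = x)
    (hzc : F z c = z) (hxd : F x d = z) (hzd : F z d = z) (ε : ι → Bool) (l : List ι) :
    l.foldl (fun y j => F y (if ε j then c else d)) x = if l.all ε then x else z := by
  induction l generalizing x with
  | nil => rfl
  | cons j l ih =>
    cases hj : ε j
    · simp [hj, hxd, ih hzc hzd]
    · simp [hj, hxc, ih hxc hxd]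

theorem TupleCentralizes.eq_of_semilattice_polynomial
    (hC : TupleCentralizes (fun _ : Fin (n + 1) => θ) ⊥)
    {F : A.carrier → A.carrier → A.carrier} (hF : IsPolynomial₂ A F) {c d z o : A.carrier}
    (hcd : θ.r c d) (hzo : θ.r z o) (hzc : F z c = z) (hoc : F o c = o) (hzd : F z d = z)
    (hod : F o d = z) : z = o := by
  let p (x : Fin (n + 1) → A.carrier) : A.carrier :=
    (List.finRange n).foldl (fun y j => F y (x j.castSucc)) (x (Fin.last n))
  have hp : IsPolynomial A p :=
    hF.foldl (v := fun j x => x (Fin.castSucc j)) (fun j => .proj _) _ (.proj _)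
  let a : Fin (n + 1) → A.carrier := Fin.snoc (fun _ => d) z
  let b : Fin (n + 1) → A.carrier := Fin.snoc (fun _ => c) o
  have hab (i : Fin (n + 1)) : θ.r (a i) (b i) := by
    cases i using Fin.lastCases with
    | last => simpa only [a, b, Fin.snoc_last] using hzo
    | cast j => simpa only [a, b, Fin.snoc_castSucc] using θ.symm hcd
  have hval (ε : Fin n → Bool) (w : Bool) : p (chooseVec id a b (Fin.snoc ε w)) =
      if ∀ j, ε j = true then (if w then o else z) else z := by
    simp only [p, a, b, chooseVec, id, Fin.snoc_last, Fin.snoc_castSucc]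
    rw [foldl_ite_eq _ hzc _ hzd]
    · simp
    · cases w <;> assumption
    · cases w <;> assumption
  have h := hC _ p hp id a b hab fun ε hε => by
    have hε : ¬ ∀ j, ε j = true := fun h => hε (funext h)
    simp only [hval, if_neg hε]
    exact Con.refl _ _
  simp only [hval, implies_true, if_true, Bool.false_eq_true, if_false] at h
  exact h

theorem TupleCentralizes.injOn_of_injOn {e : A.carrier → A.carrier}
    [Finite (Set.range e)] (hC : TupleCentralizes (fun _ : Fin (n + 1) => θ) ⊥)
    (he : IsMinimalIdempotent θ e) {f : A.carrier → A.carrier → A.carrier}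
    (hf : IsPolynomial₂ A f) (hef : ∀ x y, e (f x y) = f x y) {c d : A.carrier} (hcd : θ.r c d)
    (hinj : (Set.range e).InjOn fun x => f x c) : (Set.range e).InjOn fun x => f x d := by
  by_contra hd
  have hcol : θ.CollapsedBy ((fun x => f x d) ∘ e) :=
    not_not.1 fun h => hd (he.injOn _ (hf.apply (.proj 0) (.const d)) h)
  obtain ⟨k, hk⟩ := exists_forall_iterate_succ_eqOn_id (Set.range e)
  let F (x y : A.carrier) : A.carrier := (fun x => f x y)^[k + 1] x
  have hswap : IsPolynomial₂ A fun y x => f x y := hf.apply (.proj 1) (.proj 0)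
  have hF : IsPolynomial₂ A F := (hswap.iterate (k + 1)).apply (.proj 1) (.proj 0)
  have heF (x y : A.carrier) : e (F x y) = F x y := by
    simp only [F, Function.iterate_succ_apply', hef]
  have hFc (x : A.carrier) : F (e x) c = e x :=
    hk _ (fun x _ => ⟨_, hef x c⟩) hinj (Set.mem_range_self x)
  have hFd {x y : A.carrier} (hxy : θ.r (e x) (e y)) : F (e x) d = F (e y) d := by
    have h := hcol _ _ hxy
    simp only [Function.comp_apply, he.idem] at h
    simp only [F, Function.iterate_succ_apply, h]
  have hfix {x y : A.carrier} (hxy : θ.r (e x) (e y)) : F (e x) d = e y := by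
    have hxz : θ.r (e x) (F (e x) d) := by
      simpa only [hFc] using θ.r_polynomial₂ hF (θ.refl (e x)) hcd
    refine hC.eq_of_semilattice_polynomial hF hcd (θ.trans (θ.symm hxz) hxy) ?_ (hFc y) ?_
      (hFd (θ.symm hxy))
    · simpa only [heF] using hFc (F (e x) d)
    · simpa only [heF] using (hFd (y := F (e x) d) (by simpa only [heF] using hxz)).symm
  refine he.not_collapsedBy fun x y hxy => ?_
  exact (hfix (θ.refl _)).symm.trans (hfix (θ.r_polynomial₁ he.isPolynomial hxy))

theorem TupleCentralizes.injOn_update_of_injOn {e : A.carrier → A.carrier}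
    [Finite (Set.range e)] (hC : TupleCentralizes (fun _ : Fin (n + 1) => θ) ⊥)
    (he : IsMinimalIdempotent θ e) {m : ℕ} {p : (Fin m → A.carrier) → A.carrier}
    (hp : IsPolynomial A p) (hep : ∀ x, e (p x) = p x) (i : Fin m) {v w : Fin m → A.carrier}
    (hvw : ∀ j, θ.r (v j) (w j)) (hv : (Set.range e).InjOn fun x => p (Function.update v i x)) :
    (Set.range e).InjOn fun x => p (Function.update w i x) := by
  refine update_induction (K := fun _ => θ.r) hvw
    (P := fun w => (Set.range e).InjOn fun x => p (Function.update w i x)) hv fun u j c huc hu => ?_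
  let g (x y : A.carrier) : A.carrier := p (Function.update (Function.update u j y) i x)
  have hg : IsPolynomial₂ A g := hp.comp
    (IsPolynomial.update (IsPolynomial.update (fun k => .const (u k)) j (.proj 1)) i (.proj 0))
  refine hC.injOn_of_injOn he hg (fun _ _ => hep _) huc ?_
  simpa only [g, Function.update_eq_self] using hu

end Twins

section InducedAlgebra

variable {A : Algebra σ}

/-- The signature with a symbol for each operation on `N` that is the restriction of a polynomial
of `A`. -/
def inducedSignature (A : Algebra σ) (N : Set A.carrier) : Signature where
  ops := Σ n, {f : (Fin n → N) → N // ∃ p, IsPolynomial A p ∧ ∀ v, p (Subtype.val ∘ v) = f v}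
  arity := Sigma.fst

/-- The algebra `A|_N` induced on a subset `N` by the polynomials of `A` that preserve `N`. -/
def inducedAlgebra (A : Algebra σ) (N : Set A.carrier) : Algebra (inducedSignature A N) where
  carrier := N
  interp o := o.2.1

theorem IsPolynomial.exists_of_inducedAlgebra {N : Set A.carrier} {n : ℕ}
    {f : (Fin n → (inducedAlgebra A N).carrier) → (inducedAlgebra A N).carrier}
    (hf : IsPolynomial (inducedAlgebra A N) f) :
    ∃ p, IsPolynomial A p ∧ ∀ v : Fin n → N, p (Subtype.val ∘ v) = (f v).1 := by
  induction hf with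
  | proj i => exact ⟨_, .proj i, fun _ => rfl⟩
  | const a => exact ⟨_, .const a.1, fun _ => rfl⟩
  | app o g _ ih =>
    choose q hq hqg using ih
    obtain ⟨n, f, p, hp, hpf⟩ := o
    refine ⟨_, hp.comp hq, fun v => ?_⟩
    exact (congrArg p (funext fun j => hqg j v)).trans (hpf fun j => g j v)

theorem IsPolynomial.inducedAlgebra {N : Set A.carrier} {n : ℕ}
    {p : (Fin n → A.carrier) → A.carrier} (hp : IsPolynomial A p)
    (hN : ∀ v : Fin n → N, p (Subtype.val ∘ v) ∈ N) :
    IsPolynomial (inducedAlgebra A N) fun v => ⟨p (Subtype.val ∘ v), hN v⟩ :=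
  .app (A := UA.inducedAlgebra A N) ⟨n, fun v => ⟨_, hN v⟩, p, hp, fun _ => rfl⟩ _ .proj

end InducedAlgebra

section CancellationDichotomy

variable {X : Type} {n : ℕ}

/-- The operation `f` is injective in its `i`-th argument. -/
def CancelsAt (f : (Fin n → X) → X) (i : Fin n) : Prop :=
  ∀ v, Function.Injective fun x => f (Function.update v i x)

/-- The operation `f` does not depend on its `i`-th argument. -/
def IgnoresAt (f : (Fin n → X) → X) (i : Fin n) : Prop :=
  ∀ v x, f (Function.update v i x) = f v

/-- Every polynomial of `M`, in each argument, either cancels or ignores it. -/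
def CancellationDichotomy (M : Algebra σ) : Prop :=
  ∀ (n : ℕ) (f : (Fin n → M.carrier) → M.carrier), IsPolynomial M f →
    ∀ i, CancelsAt f i ∨ IgnoresAt f i

/-- The tuples with equal entries at `i` and `j`. -/
def diagonal (X : Type) (i j : Fin n) : Set (Fin n → X) := {w | w i = w j}

theorem diagonal_comm (i j : Fin n) : diagonal X i j = diagonal X j i :=
  Set.ext fun _ => eq_comm

theorem update_mem_diagonal {i j : Fin n} (hij : i ≠ j) (w : Fin n → X) :
    Function.update w i (w j) ∈ diagonal X i j := by
  change Function.update w i (w j) i = Function.update w i (w j) j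
  rw [Function.update_self, Function.update_of_ne hij.symm]

theorem CancelsAt.not_ignoresAt_of_eqOn [Nontrivial X] {f g : (Fin n → X) → X} {i j k : Fin n}
    (hf : CancelsAt f j) (hij : i ≠ j) (hkj : k ≠ j) (h : (diagonal X i k).EqOn f g) :
    ¬ IgnoresAt g j := by
  intro hg
  obtain ⟨a, b, hab⟩ := exists_pair_ne X
  have hdiag (x : X) : Function.update (fun _ => a) j x ∈ diagonal X i k := by
    change Function.update (fun _ => a) j x i = Function.update (fun _ => a) j x k
    rw [Function.update_of_ne hij, Function.update_of_ne hkj]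
  refine hab (hf (fun _ => a) ?_)
  change f _ = f _
  rw [h (hdiag a), h (hdiag b), hg, hg]

theorem IgnoresAt.eq_of_eqOn {f g : (Fin n → X) → X} {i j : Fin n} (hf : IgnoresAt f i)
    (hg : IgnoresAt g i) (hij : i ≠ j) (h : (diagonal X i j).EqOn f g) : f = g := by
  funext w
  rw [← hf w (w j), ← hg w (w j)]
  exact h (update_mem_diagonal hij w)

variable {M : Algebra σ} [Finite M.carrier]

-- If `r` is a quasigroup polynomial and `r x (w x) = o`, then `r (g₁ v) (w (g₂ v)) = o` exactly
-- when `g₁ v = g₂ v`; and `w x` is the value at `o` of a power of the permutation `r x`.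
theorem CancelsAt.exists_polynomial_eq_iff {q : (Fin n → M.carrier) → M.carrier}
    (hq : IsPolynomial M q) {i j : Fin n} (hij : i ≠ j) (hi : CancelsAt q i) (hj : CancelsAt q j)
    (o : M.carrier) {m : ℕ} {g₁ g₂ : (Fin m → M.carrier) → M.carrier} (hg₁ : IsPolynomial M g₁)
    (hg₂ : IsPolynomial M g₂) : ∃ h, IsPolynomial M h ∧ ∀ v, h v = o ↔ g₁ v = g₂ v := by
  let r (x y : M.carrier) : M.carrier :=
    q (Function.update (Function.update (fun _ => o) i x) j y)
  have hr : IsPolynomial₂ M r :=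
    hq.comp (IsPolynomial.update (IsPolynomial.update (fun _ => .const o) i (.proj 0)) j (.proj 1))
  have hleft (y : M.carrier) : Function.Injective fun x => r x y := by
    simpa only [r, Function.update_comm hij] using hi (Function.update (fun _ => o) j y)
  obtain ⟨k, hk⟩ := exists_forall_iterate_succ_eq_id M.carrier
  let w (x : M.carrier) : M.carrier := (r x)^[k] o
  have hw (x : M.carrier) : r x (w x) = o := by
    rw [← Function.iterate_succ_apply' (r x), hk (r x) (hj _), id]
  refine ⟨fun v => r (g₁ v) (w (g₂ v)), hr.apply hg₁ ((hr.iterate k).apply hg₂ (.const o)),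
    fun v => ⟨fun h => hleft (w (g₂ v)) (h.trans (hw _).symm), fun h => ?_⟩⟩
  change r (g₁ v) (w (g₂ v)) = o
  rw [h, hw]

variable [Nontrivial M.carrier] {f g : (Fin n → M.carrier) → M.carrier} {i j k : Fin n}

theorem CancellationDichotomy.eq_of_cancelsAt (hM : CancellationDichotomy M)
    (hf : IsPolynomial M f) (hg : IsPolynomial M g) (hij : i ≠ j) (hjk : j ≠ k)
    (h₁ : (diagonal M.carrier i j).EqOn f g) (h₂ : (diagonal M.carrier i k).EqOn f g)
    {q : (Fin n → M.carrier) → M.carrier} (hq : IsPolynomial M q) (hqi : CancelsAt q i)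
    (hqj : CancelsAt q j) : f = g := by
  obtain ⟨o⟩ : Nonempty M.carrier := inferInstance
  obtain ⟨h, hh, hiff⟩ := hqi.exists_polynomial_eq_iff hq hij hqj o hf hg
  have hignore : IgnoresAt h j := (hM n h hh j).resolve_left fun hcancel =>
    hcancel.not_ignoresAt_of_eqOn (g := fun _ => o) hij hjk.symm
      (fun w hw => (hiff w).2 (h₂ hw)) fun _ _ => rfl
  have ho : h = fun _ => o := by
    refine hignore.eq_of_eqOn (fun _ _ => rfl) hij.symm ?_
    rw [diagonal_comm]
    exact fun w hw => (hiff w).2 (h₁ hw)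
  exact funext fun w => (hiff w).1 (congrFun ho w)

theorem CancellationDichotomy.eq_of_eqOn_diagonal (hM : CancellationDichotomy M)
    (hf : IsPolynomial M f) (hg : IsPolynomial M g) (hij : i ≠ j) (hjk : j ≠ k)
    (h₁ : (diagonal M.carrier i j).EqOn f g) (h₂ : (diagonal M.carrier i k).EqOn f g) :
    f = g := by
  obtain hfj | hfj := hM n f hf j <;> obtain hgj | hgj := hM n g hg j
  · obtain hfi | hfi := hM n f hf i
    · exact hM.eq_of_cancelsAt hf hg hij hjk h₁ h₂ hf hfi hfj
    obtain hgi | hgi := hM n g hg i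
    · exact hM.eq_of_cancelsAt hf hg hij hjk h₁ h₂ hg hgi hgj
    exact hfi.eq_of_eqOn hgi hij h₁
  · exact absurd hgj (hfj.not_ignoresAt_of_eqOn hij hjk.symm h₂)
  · exact absurd hfj (hgj.not_ignoresAt_of_eqOn hij hjk.symm h₂.symm)
  · exact hfj.eq_of_eqOn hgj hij.symm (diagonal_comm (X := M.carrier) i j ▸ h₁)

end CancellationDichotomy

section Trace

variable {A : Algebra σ} {θ : Con A} {e : A.carrier → A.carrier} {n : ℕ}

/-- The trace of the minimal set `range e` in the `θ`-class of `a`. -/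
def trace (θ : Con A) (e : A.carrier → A.carrier) (a : A.carrier) : Set A.carrier :=
  Set.range e ∩ {x | θ.r a x}

theorem IsMinimalIdempotent.apply_of_mem_trace (he : IsMinimalIdempotent θ e) {a x : A.carrier}
    (hx : x ∈ trace θ e a) : e x = x := by
  obtain ⟨⟨y, rfl⟩, -⟩ := hx
  exact he.idem y

theorem IsMinimalIdempotent.apply_mem_trace (he : IsMinimalIdempotent θ e) {a x : A.carrier}
    (ha : e a = a) (hx : θ.r a x) : e x ∈ trace θ e a := by
  refine ⟨⟨x, rfl⟩, ?_⟩
  have h := θ.r_polynomial₁ he.isPolynomial hx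
  rwa [ha] at h

theorem rel_of_mem_trace {a x y : A.carrier} (hx : x ∈ trace θ e a) (hy : y ∈ trace θ e a) :
    θ.r x y :=
  θ.trans (θ.symm hx.2) hy.2

theorem TupleCentralizes.cancelsAt_or_ignoresAt [Finite (Set.range e)]
    (hC : TupleCentralizes (fun _ : Fin (n + 1) => θ) ⊥) (he : IsMinimalIdempotent θ e)
    {a : A.carrier} {m : ℕ} {f : (Fin m → trace θ e a) → trace θ e a}
    {p : (Fin m → A.carrier) → A.carrier} (hp : IsPolynomial A p)
    (hpf : ∀ v, p (Subtype.val ∘ v) = f v) (i : Fin m) : CancelsAt f i ∨ IgnoresAt f i := by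
  let s (v : Fin m → trace θ e a) (x : A.carrier) : A.carrier :=
    e (p (Function.update (Subtype.val ∘ v) i x))
  have hs (v : Fin m → trace θ e a) : IsPolynomial₁ A (s v) := he.isPolynomial.apply
    (hp.comp (IsPolynomial.update (fun j => .const (v j).1) i (.proj 0)))
  have hfs (v : Fin m → trace θ e a) (x : trace θ e a) : (f (Function.update v i x)).1 = s v x := by
    rw [← he.apply_of_mem_trace (f (Function.update v i x)).2, ← hpf, Function.comp_update]
  by_cases hcol : ∀ v, θ.CollapsedBy (s v ∘ e)
  · refine Or.inr fun v x => Subtype.ext ?_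
    have h := hcol v x (v i) (rel_of_mem_trace x.2 (v i).2)
    simp only [Function.comp_apply, he.apply_of_mem_trace x.2, he.apply_of_mem_trace (v i).2] at h
    rw [hfs, h, ← hfs, Function.update_eq_self]
  · obtain ⟨v, hv⟩ := not_forall.1 hcol
    refine Or.inl fun w x y hxy => Subtype.ext ?_
    have hw : (Set.range e).InjOn (s w) :=
      hC.injOn_update_of_injOn he (he.isPolynomial.apply hp) (fun _ => he.idem _) i
        (fun j => rel_of_mem_trace (v j).2 (w j).2) (he.injOn _ (hs v) hv)
    refine hw x.2.1 y.2.1 ?_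
    rw [← hfs, ← hfs]
    exact congrArg Subtype.val hxy

theorem TupleCentralizes.cancellationDichotomy [Finite (Set.range e)]
    (hC : TupleCentralizes (fun _ : Fin (n + 1) => θ) ⊥) (he : IsMinimalIdempotent θ e)
    (a : A.carrier) : CancellationDichotomy (inducedAlgebra A (trace θ e a)) := by
  intro m f hf i
  obtain ⟨p, hp, hpf⟩ := hf.exists_of_inducedAlgebra
  exact hC.cancelsAt_or_ignoresAt he hp hpf i

theorem exists_polynomial₁_separating_on_class (hθ : IsAtom θ) {a b : A.carrier} (hab : θ.r a b)
    (hne : e a ≠ e b) {u v : A.carrier} (huv : θ.r u v) (huv' : u ≠ v) :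
    ∃ t, IsPolynomial₁ A t ∧ θ.r a (t u) ∧ e (t u) ≠ e (t v) := by
  classical
  obtain ⟨t, ht, htuv⟩ := exists_polynomial₁_separating hθ
    (Setoid.ker fun x => if θ.r a x then some (e x) else none)
    ⟨a, b, hab, by simpa [Setoid.ker_def, hab, θ.refl] using hne⟩ huv huv'
  have hrel : θ.r a (t u) ↔ θ.r a (t v) :=
    ⟨fun h => θ.trans h (θ.r_polynomial₁ ht huv),
      fun h => θ.trans h (θ.symm (θ.r_polynomial₁ ht huv))⟩
  refine ⟨t, ht, ?_⟩
  by_cases h : θ.r a (t u)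
  · simpa [Setoid.ker_def, h, ← hrel] using htuv
  · simp [Setoid.ker_def, h, ← hrel] at htuv

end Trace

section Subquotients

variable {A B : Algebra σ}

/-- The map `h` induces a homomorphism from `A` to `B/δ`. -/
def IsHomModulo (δ : Con B) (h : A.carrier → B.carrier) : Prop :=
  ∀ (o : σ.ops) (x : Fin (σ.arity o) → A.carrier), δ.r (h (A.interp o x)) (B.interp o (h ∘ x))

variable {δ : Con B} {h : A.carrier → B.carrier}

theorem IsHomModulo.eval (hh : IsHomModulo δ h) {X : Type} (v : X → A.carrier) (t : Term σ X) :
    δ.r (h (t.eval A v)) (t.eval B (h ∘ v)) := by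
  induction t with
  | var x => exact δ.refl _
  | app o t ih => exact δ.trans (hh o _) (δ.compat o _ _ ih)

theorem IsHomModulo.exists_polynomial (hh : IsHomModulo δ h) {n : ℕ}
    {p : (Fin n → A.carrier) → A.carrier} (hp : IsPolynomial A p) :
    ∃ q, IsPolynomial B q ∧ ∀ v, δ.r (h (p v)) (q (h ∘ v)) := by
  induction hp with
  | proj i => exact ⟨_, .proj i, fun _ => δ.refl _⟩
  | const a => exact ⟨_, .const (h a), fun _ => δ.refl _⟩
  | app o g _ ih =>
    choose q hq hgq using ih
    exact ⟨_, .app o q hq, fun v => δ.trans (hh o _) (δ.compat o _ _ fun j => hgq j v)⟩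

/-- The preimage in `A` of the congruence `θ/δ` of `B/δ`. -/
def IsHomModulo.comap (hh : IsHomModulo δ h) (θ : Con B) (hθ : δ ≤ θ) : Con A where
  r x y := θ.r (h x) (h y)
  refl _ := θ.refl _
  symm := θ.symm
  trans := θ.trans
  compat o x y hxy := θ.trans (hθ _ _ (hh o x))
    (θ.trans (θ.compat o _ _ hxy) (θ.symm (hθ _ _ (hh o y))))

theorem TupleCentralizes.comap (hh : IsHomModulo δ h) {n : ℕ} {γ : Fin (n + 1) → Con B}
    (hγ : ∀ i, δ ≤ γ i) (hC : TupleCentralizes γ δ) :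
    TupleCentralizes (fun i => hh.comap (γ i) (hγ i)) (hh.comap δ le_rfl) := by
  intro N p hp g a b hab hε
  obtain ⟨q, hq, hpq⟩ := hh.exists_polynomial hp
  have hpq (ε : Fin (n + 1) → Bool) :
      δ.r (h (p (chooseVec g a b ε))) (q (chooseVec g (h ∘ a) (h ∘ b) ε)) := by
    have hchoose : h ∘ chooseVec g a b ε = chooseVec g (h ∘ a) (h ∘ b) ε :=
      funext fun _ => apply_ite h _ _ _
    exact hchoose ▸ hpq _
  exact δ.trans (hpq _) (δ.trans (hC N q hq g _ _ hab fun ε hne =>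
    δ.trans (δ.symm (hpq _)) (δ.trans (hε ε hne) (hpq _))) (δ.symm (hpq _)))

theorem IsVariety.mem_of_separating {V : Algebra σ → Prop} (hV : IsVariety V) (hB : V B)
    {ι : Type} {f : ι → A.carrier → B.carrier} (hf : ∀ i, IsHomModulo δ (f i))
    (hsep : ∀ x y, (∀ i, δ.r (f i x) (f i y)) → x = y) : V A := by
  obtain ⟨E, hE⟩ := hV
  rw [hE] at hB ⊢
  refine fun s hs v => hsep _ _ fun i => ?_
  refine δ.trans ((hf i).eval v s.1) ?_
  rw [hB s hs]
  exact δ.symm ((hf i).eval v s.2)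

/-- The subalgebra of `A/δ` generated by the classes of the elements `v x`, encoded as a quotient
of the terms. -/
noncomputable def generatedSubquotient (A : Algebra σ) (δ : Con A) {X : Type}
    (v : X → A.carrier) : Algebra σ where
  carrier := Quotient (δ.toSetoid.comap (Term.eval A v))
  interp o x := Quotient.mk _ (.app o fun i => (x i).out)

namespace generatedSubquotient

variable {δ : Con A} {X : Type} {v : X → A.carrier}

/-- A representative in `A` of an element of the generated subquotient. -/
noncomputable def rep (u : (generatedSubquotient A δ v).carrier) : A.carrier :=
  (Quotient.out u).eval A v

theorem isHomModulo_rep : IsHomModulo δ (rep (δ := δ) (v := v)) :=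
  fun _ _ => Quotient.mk_out (s := δ.toSetoid.comap (Term.eval A v)) _

theorem eq_of_rep {x y : (generatedSubquotient A δ v).carrier} (h : δ.r (rep x) (rep y)) : x = y :=
  Quotient.out_equiv_out.1 h

theorem comap_rep_eq_bot : (isHomModulo_rep (v := v)).comap δ le_rfl = ⊥ :=
  bot_unique fun _ _ => eq_of_rep

theorem exists_rep (x : X) : ∃ u : (generatedSubquotient A δ v).carrier, δ.r (rep u) (v x) :=
  ⟨_, Quotient.mk_out (s := δ.toSetoid.comap (Term.eval A v)) (Term.var x)⟩

theorem mem_variety {V : Algebra σ → Prop} (hV : IsVariety V) (hA : V A) :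
    V (generatedSubquotient A δ v) :=
  hV.mem_of_separating hA (fun _ : Unit => isHomModulo_rep) fun _ _ h => eq_of_rep (h ())

theorem finite {V : Algebra σ → Prop} (hA : V A) [Finite (freeAlg V X).carrier] :
    Finite (generatedSubquotient A δ v).carrier := by
  let f : (freeAlg V X).carrier → (generatedSubquotient A δ v).carrier :=
    Quotient.map id fun s t hst => show δ.r _ _ from hst A hA v ▸ δ.refl _
  refine Finite.of_surjective f fun u => ?_
  obtain ⟨t, rfl⟩ := Quotient.exists_rep u
  exact ⟨Quotient.mk _ t, rfl⟩

end generatedSubquotient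

end Subquotients

section PolynomialAlgebra

variable {B : Algebra σ} {n : ℕ}

/-- The algebra of `n`-ary polynomials of `B`, with pointwise operations. -/
def polynomialAlgebra (B : Algebra σ) (n : ℕ) : Algebra σ where
  carrier := {p : (Fin n → B.carrier) → B.carrier // IsPolynomial B p}
  interp o x := ⟨fun w => B.interp o fun j => (x j).1 w, .app o _ fun j => (x j).2⟩

theorem polynomialAlgebra_mem_variety {V : Algebra σ → Prop} (hV : IsVariety V) (hB : V B) :
    V (polynomialAlgebra B n) :=
  hV.mem_of_separating (δ := ⊥) hB (f := fun w p => p.1 w) (fun _ _ _ => rfl)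
    fun _ _ h => Subtype.ext (funext h)

/-- The congruence of agreement at the points of `S`. For three diagonals of a trace these
congruences violate meet-semidistributivity. -/
def agreeOn (S : Set (Fin n → B.carrier)) : Con (polynomialAlgebra B n) where
  r p q := S.EqOn p.1 q.1
  refl _ := Set.eqOn_refl _ _
  symm := Set.EqOn.symm
  trans := Set.EqOn.trans
  compat o _ _ h _ hw := congrArg (B.interp o) (funext fun i => h i hw)

theorem CancellationDichotomy.eqOn_pi {N : Set B.carrier} [Finite N] [Nontrivial N]
    (hN : CancellationDichotomy (inducedAlgebra B N)) {f g : (Fin n → B.carrier) → B.carrier}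
    (hf : IsPolynomial B f) (hg : IsPolynomial B g)
    (hfN : Set.MapsTo f (Set.univ.pi fun _ => N) N) (hgN : Set.MapsTo g (Set.univ.pi fun _ => N) N)
    {i j k : Fin n} (hij : i ≠ j) (hjk : j ≠ k)
    (h₁ : Set.EqOn f g (Set.univ.pi (fun _ => N) ∩ diagonal B.carrier i j))
    (h₂ : Set.EqOn f g (Set.univ.pi (fun _ => N) ∩ diagonal B.carrier i k)) :
    Set.EqOn f g (Set.univ.pi fun _ => N) := by
  have : Finite (inducedAlgebra B N).carrier := ‹Finite N›
  have : Nontrivial (inducedAlgebra B N).carrier := ‹Nontrivial N›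
  have hmem (v : Fin n → N) : Subtype.val ∘ v ∈ Set.univ.pi fun _ => N := fun l _ => (v l).2
  have heq := hN.eq_of_eqOn_diagonal (hf.inducedAlgebra fun v => hfN (hmem v))
    (hg.inducedAlgebra fun v => hgN (hmem v)) hij hjk
    (fun v hv => Subtype.ext (h₁ ⟨hmem v, congrArg Subtype.val hv⟩))
    (fun v hv => Subtype.ext (h₂ ⟨hmem v, congrArg Subtype.val hv⟩))
  intro w hw
  exact congrArg Subtype.val (congrFun heq fun l => ⟨w l, hw l trivial⟩)

variable {θ : Con B} {e : B.carrier → B.carrier} {a b : B.carrier} {i j k : Fin n}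

theorem IsMinimalIdempotent.mapsTo_pi_trace (he : IsMinimalIdempotent θ e) (ha : e a = a)
    {p : (Fin n → B.carrier) → B.carrier} (hp : IsPolynomial B p) {w : Fin n → B.carrier}
    (hw : w ∈ Set.univ.pi fun _ => trace θ e a) (hpw : θ.r a (p w)) :
    Set.MapsTo (fun v => e (p v)) (Set.univ.pi fun _ => trace θ e a) (trace θ e a) :=
  fun _ hv => he.apply_mem_trace ha <| θ.trans hpw <|
    θ.r_polynomial hp fun l => rel_of_mem_trace (hw l trivial) (hv l trivial)

theorem agreeOn_diagonal_inf [Finite B.carrier] (hθ : IsAtom θ) (he : IsMinimalIdempotent θ e)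
    (hN : CancellationDichotomy (inducedAlgebra B (trace θ e a))) (ha : e a = a) (hb : e b = b)
    (hab : θ.r a b) (hne : a ≠ b) (hij : i ≠ j) (hjk : j ≠ k) :
    agreeOn (Set.univ.pi (fun _ => trace θ e a) ∩ diagonal B.carrier i j) ⊓
      agreeOn (Set.univ.pi (fun _ => trace θ e a) ∩ diagonal B.carrier i k) =
    agreeOn (Set.univ.pi fun _ => trace θ e a) := by
  refine le_antisymm ?_ fun p q h => ⟨h.mono Set.inter_subset_left, h.mono Set.inter_subset_left⟩
  rintro p q ⟨hpqj, hpqk⟩ w hw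
  have haN : a ∈ trace θ e a := ⟨⟨a, ha⟩, θ.refl a⟩
  have hbN : b ∈ trace θ e a := ⟨⟨b, hb⟩, hab⟩
  have : Nontrivial (trace θ e a) := ⟨⟨a, haN⟩, ⟨b, hbN⟩, fun h => hne (congrArg Subtype.val h)⟩
  have hrel : θ.r (p.1 w) (q.1 w) := by
    have hwa (l : Fin n) : θ.r (w l) a := rel_of_mem_trace (hw l trivial) haN
    have hpqa : p.1 (fun _ => a) = q.1 fun _ => a := hpqj ⟨fun _ _ => haN, rfl⟩
    exact θ.trans (θ.r_polynomial p.2 hwa) (hpqa ▸ θ.symm (θ.r_polynomial q.2 hwa))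
  by_contra hpqw
  obtain ⟨t, ht, htw, hetw⟩ :=
    exists_polynomial₁_separating_on_class (e := e) hθ hab (by rwa [ha, hb]) hrel hpqw
  have hmaps {r : (polynomialAlgebra B n).carrier} (hr : θ.r a (t (r.1 w))) :=
    he.mapsTo_pi_trace ha (ht.apply r.2) hw hr
  have hpqw' : Set.EqOn (fun v => e (t (p.1 v))) (fun v => e (t (q.1 v)))
      (Set.univ.pi fun _ => trace θ e a) :=
    hN.eqOn_pi (he.isPolynomial.apply (ht.apply p.2)) (he.isPolynomial.apply (ht.apply q.2))
      (hmaps htw) (hmaps (θ.trans htw (θ.r_polynomial₁ ht hrel))) hij hjk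
      (hpqj.comp_left (g := e ∘ t)) (hpqk.comp_left (g := e ∘ t))
  exact hetw (hpqw' hw)

theorem not_meetSemidistributive_polynomialAlgebra [Finite B.carrier] (hθ : IsAtom θ)
    (he : IsMinimalIdempotent θ e)
    (hN : CancellationDichotomy (inducedAlgebra B (trace θ e a))) (ha : e a = a) (hb : e b = b)
    (hab : θ.r a b) (hne : a ≠ b) : ¬ MeetSemidistributive (polynomialAlgebra B 3) := by
  intro hB
  let D (i j : Fin 3) : Con (polynomialAlgebra B 3) :=
    agreeOn (Set.univ.pi (fun _ => trace θ e a) ∩ diagonal B.carrier i j)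
  have hD_comm (i j : Fin 3) : D i j = D j i := by simp only [D, diagonal_comm]
  have hαβ : D 0 2 ⊓ D 0 1 = agreeOn (Set.univ.pi fun _ => trace θ e a) :=
    agreeOn_diagonal_inf hθ he hN ha hb hab hne (by decide) (by decide)
  have hαγ : D 0 2 ⊓ D 1 2 = agreeOn (Set.univ.pi fun _ => trace θ e a) := by
    rw [hD_comm 0, hD_comm 1]
    exact agreeOn_diagonal_inf hθ he hN ha hb hab hne (by decide) (by decide)
  let π (i : Fin 3) : (polynomialAlgebra B 3).carrier := ⟨_, .proj i⟩
  have hπ (i j : Fin 3) : (D i j).r (π i) (π j) := fun _ hw => hw.2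
  have hβ : D 0 1 ≤ D 0 1 ⊔ D 1 2 := le_sup_left
  have hγ : D 1 2 ≤ D 0 1 ⊔ D 1 2 := le_sup_right
  have hαβγ : (D 0 2 ⊓ (D 0 1 ⊔ D 1 2)).r (π 0) (π 2) :=
    ⟨hπ 0 2, Con.trans _ (hβ _ _ (hπ 0 1)) (hγ _ _ (hπ 1 2))⟩
  rw [← hB _ _ _ (hαβ.trans hαγ.symm), hαβ] at hαβγ
  have hmem : ![a, a, b] ∈ Set.univ.pi fun _ => trace θ e a := by
    have haN : a ∈ trace θ e a := ⟨⟨a, ha⟩, θ.refl a⟩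
    have hbN : b ∈ trace θ e a := ⟨⟨b, hb⟩, hab⟩
    simp [Set.mem_pi, Fin.forall_fin_succ, haN, hbN]
  exact hne (hαβγ hmem)

theorem TupleCentralizes.not_isAtom [Finite B.carrier]
    (hC : TupleCentralizes (fun _ : Fin (n + 1) => θ) ⊥)
    (hB : MeetSemidistributive (polynomialAlgebra B 3)) : ¬ IsAtom θ := by
  intro hθ
  obtain ⟨e, he⟩ := exists_isMinimalIdempotent hθ
  obtain ⟨a, b, hab, hne⟩ : ∃ a b, θ.r a b ∧ e a ≠ e b := by
    simpa only [Con.CollapsedBy, not_forall, exists_prop] using he.not_collapsedBy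
  exact not_meetSemidistributive_polynomialAlgebra hθ he (hC.cancellationDichotomy he (e a))
    (he.idem a) (he.idem b) (θ.r_polynomial₁ he.isPolynomial hab) hne hB

theorem TupleCentralizes.eq_bot [Finite B.carrier]
    (hC : TupleCentralizes (fun _ : Fin (n + 1) => θ) ⊥)
    (hB : MeetSemidistributive (polynomialAlgebra B 3)) : θ = ⊥ := by
  obtain h | ⟨θ', hθ', hle⟩ := eq_bot_or_exists_atom_le θ
  · exact h
  · exact absurd hθ' ((hC.mono fun _ => hle).not_isAtom hB)

end PolynomialAlgebra

section MeetSemidistributiveToNeutral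

variable {V : Algebra σ → Prop} {A : Algebra σ} {n : ℕ}

theorem TupleCentralizes.iInf_le_of_meetSemidistributive (hV : IsVariety V)
    [Finite (freeAlg V (Fin 2)).carrier] (hSD : ∀ B, V B → MeetSemidistributive B) (hA : V A)
    {γ : Fin (n + 1) → Con A} {δ : Con A} (hC : TupleCentralizes γ δ) : ⨅ i, γ i ≤ δ := by
  intro a b hab
  let θ : Con A := ⨅ i, γ i
  have hCθ : TupleCentralizes (fun _ : Fin (n + 1) => θ) (δ ⊓ θ) :=
    (hC.mono fun i => iInf_le γ i).inf (tupleCentralizes_apply (fun _ => θ) 0)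
  let B := generatedSubquotient A (δ ⊓ θ) ![a, b]
  have hrep : IsHomModulo (δ ⊓ θ) (generatedSubquotient.rep : B.carrier → A.carrier) :=
    generatedSubquotient.isHomModulo_rep
  have hbot : hrep.comap (δ ⊓ θ) le_rfl = ⊥ :=
    generatedSubquotient.comap_rep_eq_bot
  have : Finite B.carrier := generatedSubquotient.finite hA
  have hB : V B := generatedSubquotient.mem_variety hV hA
  have hθ : hrep.comap θ inf_le_right = ⊥ := by
    refine TupleCentralizes.eq_bot (n := n) ?_ (hSD _ (polynomialAlgebra_mem_variety hV hB))
    exact hbot ▸ hCθ.comap hrep fun _ => inf_le_right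
  obtain ⟨u, hu⟩ := generatedSubquotient.exists_rep (δ := δ ⊓ θ) (v := ![a, b]) 0
  obtain ⟨v, hv⟩ := generatedSubquotient.exists_rep (δ := δ ⊓ θ) (v := ![a, b]) 1
  have huv : (hrep.comap θ inf_le_right).r u v := θ.trans hu.2 (θ.trans hab (θ.symm hv.2))
  obtain rfl : u = v := by rwa [hθ] at huv
  exact δ.trans (δ.symm hu.1) hv.1

theorem neutralCommutator_of_meetSemidistributive (hV : IsVariety V)
    [Finite (freeAlg V (Fin 2)).carrier] (hSD : ∀ B, V B → MeetSemidistributive B) (hA : V A) :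
    NeutralCommutator A (n + 1) := by
  intro γ
  refine le_antisymm (commList_le_iInf γ) ?_
  rw [commList_eq_sInf]
  exact le_sInf fun _ hC => hC.iInf_le_of_meetSemidistributive hV hSD hA

end MeetSemidistributiveToNeutral

/-- Theorem 4.5 of "On Supernilpotent Algebras": for a variety whose 2-generated
free algebra is finite, congruence meet-semidistributivity is equivalent to
neutrality of the `n`-commutator for all (equivalently, some) `n ≥ 2`. -/
theorem meet_semidistributive_iff_neutral {σ : Signature} (V : Algebra σ → Prop)
    (hV : IsVariety V) (hfin : Finite (freeAlg V (Fin 2)).carrier) :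
    ((∀ A : Algebra σ, V A → ∀ α β γ : Con A,
        Con.inf α β = Con.inf α γ → Con.inf α β = Con.inf α (Con.sup β γ)) ↔
      (∀ n : ℕ, 2 ≤ n → ∀ A : Algebra σ, V A → ∀ α : Fin (n - 1 + 1) → Con A,
        commList α = Con.sInf (Set.range α))) ∧
    ((∀ n : ℕ, 2 ≤ n → ∀ A : Algebra σ, V A → ∀ α : Fin (n - 1 + 1) → Con A,
        commList α = Con.sInf (Set.range α)) ↔
      (∃ n : ℕ, 2 ≤ n ∧ ∀ A : Algebra σ, V A → ∀ α : Fin (n - 1 + 1) → Con A,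
        commList α = Con.sInf (Set.range α))) := by
  have neutral_of_meet (hSD : ∀ A, V A → MeetSemidistributive A) (n : ℕ) (hn : 2 ≤ n)
      (A : Algebra σ) (hA : V A) : NeutralCommutator A (n - 1) := by
    obtain ⟨m, rfl⟩ := Nat.exists_eq_add_of_le' hn
    exact neutralCommutator_of_meetSemidistributive hV hSD hA
  have meet_of_neutral : (∃ n, 2 ≤ n ∧ ∀ A, V A → NeutralCommutator A (n - 1)) →
      ∀ A, V A → MeetSemidistributive A := by
    rintro ⟨n, hn, h⟩ A hA
    obtain ⟨m, rfl⟩ := Nat.exists_eq_add_of_le' hn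
    exact NeutralCommutator.meetSemidistributive (n := m) (h A hA)
  exact ⟨⟨neutral_of_meet, fun h => meet_of_neutral ⟨2, le_rfl, h 2 le_rfl⟩⟩,
    ⟨fun h => ⟨2, le_rfl, h 2 le_rfl⟩, fun h => neutral_of_meet (meet_of_neutral h)⟩⟩

end UA
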